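/- arXiv:2112.09329 — 4 statements merged into one kernel-verified Lean document; each statement's English description precedes it below -/
import Mathlib

section
/- Let e* ∈ ℝ³ be a unit vector. Let n₁, …, n_J ∈ ℝ³ be unit vectors with n_jᵀe* = 0 for all j, and let m₁, …, m_I ∈ ℝ³ be unit vectors with m_i = e* or m_i = −e* for all i. Set H = ∑_j n_j n_jᵀ − ∑_i m_i m_iᵀ. Then e*ᵀHe* = −I, and for every unit vector e ∈ ℝ³, e*ᵀHe* ≤ eᵀHe; that is, the true extrusion axis e* is a global minimizer of the quadratic form eᵀHe over the unit sphere. -/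
/-!
For every `e`, the quadratic form expands as `eᵀHe = ∑ j, (n_j ⬝ e)² - ∑ i, (m_i ⬝ e)²`
(`quadratic_form_expand`). At `e = e*` the barrel terms vanish and each base term is `1`, which gives
`-I`. For an arbitrary unit vector `e` the barrel terms are nonnegative, and each base term is at
most `1` by the Cauchy–Schwarz inequality, so the value is at least `-I`.
-/

open Matrix

lemma quadratic_form_expand {J I : ℕ} (nv : Fin J → Fin 3 → ℝ) (mv : Fin I → Fin 3 → ℝ)
    (e : Fin 3 → ℝ) :
    e ⬝ᵥ (∑ j, vecMulVec (nv j) (nv j) - ∑ i, vecMulVec (mv i) (mv i)).mulVec e =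
      ∑ j, (nv j ⬝ᵥ e) ^ 2 - ∑ i, (mv i ⬝ᵥ e) ^ 2 := by
  have key : ∀ v : Fin 3 → ℝ, e ⬝ᵥ (vecMulVec v v).mulVec e = (v ⬝ᵥ e) ^ 2 := by
    intro v
    simp only [dotProduct, mulVec, vecMulVec_apply, Fin.sum_univ_three]
    ring
  simp only [sub_mulVec, sum_mulVec, dotProduct_sub, dotProduct_sum, key]

/-- If the unit barrel normals `n_j` are orthogonal to the unit axis `e*` and the
unit base normals `m_i` equal `±e*`, then for `H = ∑ j, n_j n_jᵀ − ∑ i, m_i m_iᵀ` we have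
`e*ᵀHe* = −I` and `e*` globally minimizes the quadratic form over the unit sphere. -/
theorem true_axis_minimizes_extrusion_quadratic_form
    (J I : ℕ) (estar : Fin 3 → ℝ) (hstar : Real.sqrt (∑ k, estar k ^ 2) = 1)
    (nv : Fin J → Fin 3 → ℝ) (hn : ∀ j, Real.sqrt (∑ k, nv j k ^ 2) = 1)
    (hno : ∀ j, nv j ⬝ᵥ estar = 0)
    (mv : Fin I → Fin 3 → ℝ) (hm : ∀ i, Real.sqrt (∑ k, mv i k ^ 2) = 1)
    (hmp : ∀ i, mv i = estar ∨ mv i = -estar)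
    (H : Matrix (Fin 3) (Fin 3) ℝ)
    (hH : H = ∑ j, vecMulVec (nv j) (nv j) - ∑ i, vecMulVec (mv i) (mv i)) :
    estar ⬝ᵥ H.mulVec estar = -(I : ℝ) ∧
      ∀ e : Fin 3 → ℝ, Real.sqrt (∑ k, e k ^ 2) = 1 →
        estar ⬝ᵥ H.mulVec estar ≤ e ⬝ᵥ H.mulVec e := by
  have hstar' : ∑ k, estar k ^ 2 = 1 := Real.sqrt_eq_one.mp hstar
  have hval : estar ⬝ᵥ H.mulVec estar = -(I : ℝ) := by
    have hbase : ∀ i, (mv i ⬝ᵥ estar) ^ 2 = 1 := by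
      have hself : estar ⬝ᵥ estar = 1 := by
        simpa only [dotProduct, sq] using hstar'
      intro i
      rcases hmp i with h | h <;> simp [h, hself]
    rw [hH, quadratic_form_expand]
    simp [hno, hbase]
  refine ⟨hval, fun e he => ?_⟩
  have he' : ∑ k, e k ^ 2 = 1 := Real.sqrt_eq_one.mp he
  have hbase : ∀ i, (mv i ⬝ᵥ e) ^ 2 ≤ 1 := by
    intro i
    have hcs := Finset.sum_mul_sq_le_sq_mul_sq Finset.univ (mv i) e
    rwa [Real.sqrt_eq_one.mp (hm i), he', one_mul] at hcs
  have hbarrel : 0 ≤ ∑ j, (nv j ⬝ᵥ e) ^ 2 := Finset.sum_nonneg fun j _ => sq_nonneg _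
  have hsum : ∑ i, (mv i ⬝ᵥ e) ^ 2 ≤ (I : ℝ) := by
    simpa using Finset.sum_le_sum fun i (_ : i ∈ Finset.univ) => hbase i
  rw [hval, hH, quadratic_form_expand]
  linarith
end

section
/- Let e* ∈ ℝ³ be a unit vector. Let n₁, …, n_J ∈ ℝ³ be unit vectors with n_jᵀe* = 0 for all j, and let m₁, …, m_I ∈ ℝ³ be unit vectors with m_i = e* or m_i = −e* for all i, where I ≥ 1. Set H = ∑_j n_j n_jᵀ − ∑_i m_i m_iᵀ. Then every unit vector e ∈ ℝ³ minimizing eᵀHe over the unit sphere satisfies e = e* or e = −e*; that is, the extrusion axis is recovered uniquely up to sign. -/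
open Matrix

/-!
For a unit vector `e`, the quadratic form is `∑ j, (n_j ⬝ e)² - I (e* ⬝ e)²`, and its value at `e*`
is `-I`. Comparing a minimizer `e` with `e*` and discarding the nonnegative barrel terms gives
`I ≤ I (e* ⬝ e)²`, hence `1 ≤ (e* ⬝ e)²` because `I ≥ 1`. This is the equality case of
Cauchy–Schwarz for unit vectors, which forces `e = ±e*`.
-/

lemma quadForm_vecMulVec (v e : Fin 3 → ℝ) :
    e ⬝ᵥ (vecMulVec v v).mulVec e = (v ⬝ᵥ e) ^ 2 := by
  simp [dotProduct, mulVec, vecMulVec_apply, Fin.sum_univ_three]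
  ring

lemma quadForm_eq {J I : ℕ} (s : Fin 3 → ℝ) (nv : Fin J → Fin 3 → ℝ) (mv : Fin I → Fin 3 → ℝ)
    (hmp : ∀ i, mv i = s ∨ mv i = -s) (e : Fin 3 → ℝ) :
    e ⬝ᵥ (∑ j, vecMulVec (nv j) (nv j) - ∑ i, vecMulVec (mv i) (mv i)).mulVec e
      = ∑ j, (nv j ⬝ᵥ e) ^ 2 - I * (s ⬝ᵥ e) ^ 2 := by
  have hsq : ∀ i, (mv i ⬝ᵥ e) ^ 2 = (s ⬝ᵥ e) ^ 2 := fun i => by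
    rcases hmp i with h | h <;> simp [h]
  simp only [sub_mulVec, sum_mulVec, dotProduct_sub, dotProduct_sum, quadForm_vecMulVec, hsq]
  simp

/-- Equality case of Cauchy–Schwarz: `‖e - s‖² = 2 - 2 (s ⬝ e)` and `‖e + s‖² = 2 + 2 (s ⬝ e)`, and
one of the two right-hand sides is nonpositive. -/
lemma eq_or_eq_neg_of_one_le_sq {s e : Fin 3 → ℝ} (hs : ∑ k, s k ^ 2 = 1) (he : ∑ k, e k ^ 2 = 1)
    (h : 1 ≤ (s ⬝ᵥ e) ^ 2) : e = s ∨ e = -s := by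
  have hzero : ∀ v : Fin 3 → ℝ, ∑ k, v k ^ 2 ≤ 0 → ∀ k, v k = 0 := fun v hv k => by
    have := Finset.single_le_sum (f := fun k => v k ^ 2) (fun i _ => sq_nonneg (v i))
      (Finset.mem_univ k)
    exact pow_eq_zero_iff two_ne_zero |>.1 (le_antisymm (this.trans hv) (sq_nonneg _))
  have hsub : ∑ k, (e - s) k ^ 2 = 2 - 2 * (s ⬝ᵥ e) := by
    simp only [Fin.sum_univ_three, dotProduct, Pi.sub_apply] at *
    linarith
  have hadd : ∑ k, (e + s) k ^ 2 = 2 + 2 * (s ⬝ᵥ e) := by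
    simp only [Fin.sum_univ_three, dotProduct, Pi.add_apply] at *
    linarith
  rcases le_abs.1 ((one_le_sq_iff_one_le_abs _).1 h) with hc | hc
  · left
    ext k
    have := hzero (e - s) (by linarith) k
    simp only [Pi.sub_apply] at this
    linarith
  · right
    ext k
    have := hzero (e + s) (by linarith) k
    simp only [Pi.add_apply] at this
    simp only [Pi.neg_apply]
    linarith

/-- With unit barrel normals orthogonal to the unit axis `e*`, unit base normals
equal to `±e*`, and at least one base normal (`I ≥ 1`), every unit vector minimizing the quadratic
form of `H = ∑ j, n_j n_jᵀ − ∑ i, m_i m_iᵀ` over the unit sphere equals `e*` or `−e*`. -/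
theorem axis_recovered_uniquely_up_to_sign
    (J I : ℕ) (hI : 1 ≤ I)
    (estar : Fin 3 → ℝ) (hstar : Real.sqrt (∑ k, estar k ^ 2) = 1)
    (nv : Fin J → Fin 3 → ℝ) (hn : ∀ j, Real.sqrt (∑ k, nv j k ^ 2) = 1)
    (hno : ∀ j, nv j ⬝ᵥ estar = 0)
    (mv : Fin I → Fin 3 → ℝ) (hm : ∀ i, Real.sqrt (∑ k, mv i k ^ 2) = 1)
    (hmp : ∀ i, mv i = estar ∨ mv i = -estar)
    (H : Matrix (Fin 3) (Fin 3) ℝ)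
    (hH : H = ∑ j, vecMulVec (nv j) (nv j) - ∑ i, vecMulVec (mv i) (mv i)) :
    ∀ e : Fin 3 → ℝ, Real.sqrt (∑ k, e k ^ 2) = 1 →
      (∀ e' : Fin 3 → ℝ, Real.sqrt (∑ k, e' k ^ 2) = 1 →
        e ⬝ᵥ H.mulVec e ≤ e' ⬝ᵥ H.mulVec e') →
      e = estar ∨ e = -estar := by
  intro e he hmin
  have hs2 := Real.sqrt_eq_one.1 hstar
  have he2 := Real.sqrt_eq_one.1 he
  have hss : estar ⬝ᵥ estar = 1 := by
    rw [← hs2]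
    simp [dotProduct, sq]
  have key := hmin estar hstar
  rw [hH, quadForm_eq estar nv mv hmp, quadForm_eq estar nv mv hmp] at key
  simp only [hno, hss] at key
  have hbarrel : 0 ≤ ∑ j, (nv j ⬝ᵥ e) ^ 2 := Finset.sum_nonneg fun j _ => sq_nonneg _
  have hIpos : (0 : ℝ) < I := by exact_mod_cast hI
  refine eq_or_eq_neg_of_one_le_sq hs2 he2 (le_of_mul_le_mul_left ?_ hIpos)
  norm_num at key
  linarith
end

section
/- Let e* ∈ ℝ³ be a unit vector and let n₁, …, n_N ∈ ℝ³ be unit vectors forming the rows of N ∈ ℝ^{N×3}. Suppose the index set {1, …, N} is partitioned into a set of barrel indices, on which n_iᵀe* = 0, and a set of base indices, on which n_i = e* or n_i = −e*. Let φ^barr, φ^base ∈ ℝᴺ be weight vectors such that φ^barr_i = 0 for every base index i and φ^base_i = 0 for every barrel index i, and set H_Φ = NᵀΦ_barrᵀΦ_barr N − NᵀΦ_baseᵀΦ_base N with Φ_barr = diag(φ^barr), Φ_base = diag(φ^base). Then e*ᵀ H_Φ e* = −∑_{i=1}^N (φ^base_i)², and e*ᵀ H_Φ e* ≤ eᵀ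 H_Φ e for every unit vector e ∈ ℝ³; that is, the true extrusion axis e* is a global minimizer of the weighted quadratic form over the unit sphere. -/
open Matrix

/-!
For any vector `e`, `eᵀ H_Φ e = ∑ i, (φ^barr_i)² (n_i · e)² − ∑ i, (φ^base_i)² (n_i · e)²`
(`dotProduct_weighted_gram_mulVec`). At `e = e*` every barrel term vanishes, since either the weight
or `n_i · e*` is zero, and `(n_i · e*)² = 1` wherever `φ^base_i ≠ 0`, so the value is
`−∑ i, (φ^base_i)²`. For an arbitrary unit `e`, the first sum is nonnegative and Cauchy–Schwarz
gives `(n_i · e)² ≤ 1`, so the same number is a lower bound.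
-/

theorem dotProduct_weighted_gram_mulVec {m n : Type*} [Fintype m] [DecidableEq m] [Fintype n]
    (A : Matrix m n ℝ) (w : m → ℝ) (e : n → ℝ) :
    e ⬝ᵥ (Aᵀ * (diagonal w)ᵀ * diagonal w * A).mulVec e
      = ∑ i, w i ^ 2 * (A i ⬝ᵥ e) ^ 2 := by
  have h : Aᵀ * (diagonal w)ᵀ * diagonal w * A = (diagonal w * A)ᵀ * (diagonal w * A) := by
    simp only [transpose_mul, Matrix.mul_assoc]
  rw [h, ← mulVec_mulVec, dotProduct_mulVec, vecMul_transpose, ← mulVec_mulVec]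
  refine Finset.sum_congr rfl fun i _ => ?_
  have hi : (diagonal w *ᵥ (A *ᵥ e)) i = w i * (A i ⬝ᵥ e) := by
    rw [mulVec_diagonal]; rfl
  rw [hi]
  ring

theorem sq_dotProduct_le_one {n : Type*} [Fintype n] {u v : n → ℝ}
    (hu : ∑ k, u k ^ 2 = 1) (hv : ∑ k, v k ^ 2 = 1) : (u ⬝ᵥ v) ^ 2 ≤ 1 := by
  have h := Finset.sum_mul_sq_le_sq_mul_sq Finset.univ u v
  rwa [hu, hv, one_mul] at h

/-- Suppose the indices are partitioned into barrel indices (rows orthogonal to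
the unit axis `e*`) and base indices (rows equal to `±e*`), and the weights `φ^barr` vanish on
base indices while `φ^base` vanish on barrel indices.  Then, for
`H_Φ = NᵀΦ_barrᵀΦ_barr N − NᵀΦ_baseᵀΦ_base N`, we have
`e*ᵀ H_Φ e* = −∑ i (φ^base_i)²` and `e*` globally minimizes the weighted quadratic form over the
unit sphere. -/
theorem true_axis_minimizes_weighted_quadratic_form
    (N : ℕ) (estar : Fin 3 → ℝ) (hstar : Real.sqrt (∑ k, estar k ^ 2) = 1)
    (Nmat : Matrix (Fin N) (Fin 3) ℝ)
    (hrows : ∀ i, Real.sqrt (∑ k, Nmat i k ^ 2) = 1)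
    (base : Finset (Fin N))
    (hbarrel : ∀ i ∉ base, Nmat i ⬝ᵥ estar = 0)
    (hbase : ∀ i ∈ base, Nmat i = estar ∨ Nmat i = -estar)
    (phibarr phibase : Fin N → ℝ)
    (hphibarr : ∀ i ∈ base, phibarr i = 0)
    (hphibase : ∀ i ∉ base, phibase i = 0)
    (HPhi : Matrix (Fin 3) (Fin 3) ℝ)
    (hHPhi : HPhi = Nmatᵀ * (diagonal phibarr)ᵀ * diagonal phibarr * Nmat
      - Nmatᵀ * (diagonal phibase)ᵀ * diagonal phibase * Nmat) :
    estar ⬝ᵥ HPhi.mulVec estar = -(∑ i, (phibase i) ^ 2) ∧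
      ∀ e : Fin 3 → ℝ, Real.sqrt (∑ k, e k ^ 2) = 1 →
        estar ⬝ᵥ HPhi.mulVec estar ≤ e ⬝ᵥ HPhi.mulVec e := by
  have hquad : ∀ e : Fin 3 → ℝ, e ⬝ᵥ HPhi.mulVec e
      = ∑ i, phibarr i ^ 2 * (Nmat i ⬝ᵥ e) ^ 2 - ∑ i, phibase i ^ 2 * (Nmat i ⬝ᵥ e) ^ 2 := by
    intro e
    rw [hHPhi, sub_mulVec, dotProduct_sub, dotProduct_weighted_gram_mulVec,
      dotProduct_weighted_gram_mulVec]
  have hself : estar ⬝ᵥ estar = 1 := by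
    rw [← Real.sqrt_eq_one.mp hstar]
    simp only [dotProduct, sq]
  have hval : estar ⬝ᵥ HPhi.mulVec estar = -(∑ i, (phibase i) ^ 2) := by
    have hbarr0 : ∑ i, phibarr i ^ 2 * (Nmat i ⬝ᵥ estar) ^ 2 = 0 := by
      refine Finset.sum_eq_zero fun i _ => ?_
      by_cases hi : i ∈ base
      · simp [hphibarr i hi]
      · simp [hbarrel i hi]
    have hbase1 : ∑ i, phibase i ^ 2 * (Nmat i ⬝ᵥ estar) ^ 2 = ∑ i, phibase i ^ 2 := by
      refine Finset.sum_congr rfl fun i _ => ?_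
      by_cases hi : i ∈ base
      · rcases hbase i hi with h | h <;> simp [h, hself]
      · simp [hphibase i hi]
    rw [hquad, hbarr0, hbase1, zero_sub]
  refine ⟨hval, fun e he => ?_⟩
  rw [hval, hquad]
  have hnonneg : 0 ≤ ∑ i, phibarr i ^ 2 * (Nmat i ⬝ᵥ e) ^ 2 :=
    Finset.sum_nonneg fun i _ => by positivity
  have hle : ∑ i, phibase i ^ 2 * (Nmat i ⬝ᵥ e) ^ 2 ≤ ∑ i, phibase i ^ 2 :=
    Finset.sum_le_sum fun i _ => mul_le_of_le_one_right (sq_nonneg _)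
      (sq_dotProduct_le_one (Real.sqrt_eq_one.mp (hrows i)) (Real.sqrt_eq_one.mp he))
  linarith
end

section
/- Let K ≥ 1 and let J denote the 2K×2K all-ones matrix. Then the rank of the matrix D = Δ_W Δ_Wᵀ + Δ_B Δ_Bᵀ + J ∈ ℝ^{2K×2K} equals K + 1. -/
/-!
With `M = [Δ_W | Δ_B | 𝟏]` one has `D = M Mᵀ`, and over `ℝ` the matrices `M Mᵀ` and `M` have the
same rank. The columns of `Δ_W` sum to `𝟏`, and so do those of `Δ_B`; hence every column of `M` is a
combination of the `K + 1` columns of `A = [Δ_W | e]`, where `e` is the column of `Δ_B` with `b = 1`.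
This factorization `M = A T` (`colM_eq`) gives `rank M ≤ K + 1`. Conversely `A = M S` for a column
selection `S` (`basisA_eq`), and `A` has a left inverse when `K ≥ 1` (`leftInv_mul_basisA`), so
`rank M ≥ rank A ≥ K + 1`.
-/

open Matrix

/-- The matrix `Δ_W ∈ ℝ^{2K×K}`, with rows indexed by pairs `(k, a)`:
`(Δ_W)_{(k,a),k'} = 1` if `k = k'` and `0` otherwise. -/
def deltaW (K : ℕ) : Matrix (Fin K × Fin 2) (Fin K) ℝ :=
  Matrix.of fun p k' => if p.1 = k' then 1 else 0

/-- The matrix `Δ_B ∈ ℝ^{2K×2}`, with rows indexed by pairs `(k, a)`: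
`(Δ_B)_{(k,a),b} = 1` if `a = b` and `0` otherwise. -/
def deltaB (K : ℕ) : Matrix (Fin K × Fin 2) (Fin 2) ℝ :=
  Matrix.of fun p b => if p.2 = b then 1 else 0

/-- The block matrix `M = [Δ_W | Δ_B | 𝟏]`, which satisfies `D = M Mᵀ`. -/
def colM (K : ℕ) : Matrix (Fin K × Fin 2) (Fin K ⊕ Fin 2 ⊕ Unit) ℝ :=
  fromCols (deltaW K) (fromCols (deltaB K) (Matrix.of fun _ _ => 1))

/-- The matrix `A = [Δ_W | e]` with `e_{(k,a)} = 1` if `a = 1` and `0` otherwise; the column `e` has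
index `none`. -/
def basisA (K : ℕ) : Matrix (Fin K × Fin 2) (Option (Fin K)) ℝ :=
  Matrix.of fun p o => o.elim (if p.2 = 1 then 1 else 0) (fun k => if p.1 = k then 1 else 0)

/-- The coefficients expressing the columns of `M` through those of `A`: the column `b = 0` of `Δ_B`
is the sum of the columns of `Δ_W` minus `e`, and `𝟏` is the sum of the columns of `Δ_W`. -/
def coeffT (K : ℕ) : Matrix (Option (Fin K)) (Fin K ⊕ Fin 2 ⊕ Unit) ℝ :=
  Matrix.of fun o => o.elim
    (Sum.elim (fun _ => 0) (Sum.elim (fun b => if b = 0 then -1 else 1) (fun _ => 0)))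
    (fun k => Sum.elim (fun k' => if k = k' then 1 else 0)
      (Sum.elim (fun b => if b = 0 then 1 else 0) (fun _ => 1)))

/-- The selection of the columns of `A` among those of `M`. -/
def selS (K : ℕ) : Matrix (Fin K ⊕ Fin 2 ⊕ Unit) (Option (Fin K)) ℝ :=
  Matrix.of fun c o => if c = o.elim (Sum.inr (Sum.inl 1)) Sum.inl then 1 else 0

/-- A left inverse of `A`: row `k` reads the entry `(k, 0)`, and the row `none` takes the difference
of the entries `(k₀, 1)` and `(k₀, 0)`. -/
def leftInv (K : ℕ) (k₀ : Fin K) : Matrix (Option (Fin K)) (Fin K × Fin 2) ℝ :=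
  Matrix.of fun o p => o.elim
    ((if p = (k₀, 1) then 1 else 0) - (if p = (k₀, 0) then 1 else 0))
    (fun k => if p = (k, 0) then 1 else 0)

lemma colM_mul_transpose (K : ℕ) :
    colM K * (colM K)ᵀ = deltaW K * (deltaW K)ᵀ + deltaB K * (deltaB K)ᵀ
      + Matrix.of fun (_ _ : Fin K × Fin 2) => (1 : ℝ) := by
  ext p q
  simp [colM, Matrix.mul_apply, Fintype.sum_sum_type, add_assoc]

lemma colM_eq (K : ℕ) : colM K = basisA K * coeffT K := by
  ext ⟨k, a⟩ c
  rcases c with k' | b | u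
  · simp [colM, basisA, coeffT, deltaW, Matrix.mul_apply, Fintype.sum_option]
  · fin_cases a <;> fin_cases b <;>
      simp [colM, basisA, coeffT, deltaB, Matrix.mul_apply, Fintype.sum_option]
  · simp [colM, basisA, coeffT, Matrix.mul_apply, Fintype.sum_option]

lemma basisA_eq (K : ℕ) : basisA K = colM K * selS K := by
  ext ⟨k, a⟩ o
  cases o <;> simp [colM, basisA, selS, deltaW, deltaB, Matrix.mul_apply]

lemma leftInv_mul_basisA (K : ℕ) (k₀ : Fin K) : leftInv K k₀ * basisA K = 1 := by
  ext o o'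
  cases o <;> cases o' <;>
    simp [leftInv, basisA, Matrix.mul_apply, sub_mul, Matrix.one_apply, -mul_ite]

/-- For `K ≥ 1`, the matrix
`D = Δ_W Δ_Wᵀ + Δ_B Δ_Bᵀ + J ∈ ℝ^{2K×2K}` (with `J` the all-ones matrix) has rank `K + 1`. -/
theorem rank_D_eq_K_add_one (K : ℕ) (hK : 1 ≤ K) :
    (deltaW K * (deltaW K)ᵀ + deltaB K * (deltaB K)ᵀ
      + Matrix.of fun (_ _ : Fin K × Fin 2) => (1 : ℝ)).rank = K + 1 := by
  rw [← colM_mul_transpose, Matrix.rank_self_mul_transpose]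
  apply le_antisymm
  · rw [colM_eq]
    refine (Matrix.rank_mul_le_left _ _).trans ?_
    simpa using (basisA K).rank_le_card_width
  · have h1 : (leftInv K ⟨0, hK⟩ * basisA K).rank = K + 1 := by
      rw [leftInv_mul_basisA, Matrix.rank_one]
      simp
    rw [← h1]
    refine (Matrix.rank_mul_le_right _ _).trans ?_
    rw [basisA_eq]
    exact Matrix.rank_mul_le_left _ _
end
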